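/- Let E be a uniformly convex real Banach space satisfying Opial's condition, C a nonempty closed convex subset of E, and T an (α,β,γ,δ)-symmetric generalized hybrid self-mapping of C with nonempty fixed point set F(T), satisfying α+2β+γ ≥ 0, α+β > 0, β ≤ 0 and δ ≥ 0. Let {λₙ} ⊆ [0,1] and {γₙ} ⊆ [a,1] with 0 < a ≤ 1, suppose liminf λₙ(1−λₙ) > 0, and define the Ishikawa sequence by x₁ = x ∈ C, yₙ = (1−λₙ)xₙ + λₙTxₙ, x_{n+1} = (1−γₙ)xₙ + γₙTyₙ. Then {xₙ} converges weakly to some point x₀ ∈ F(T). -/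

import Mathlib

open Filter Topology

/-!
A symmetric generalized hybrid map `T` is quasi-nonexpansive, so the distances from the iterates to
a fixed point `p` decrease, and `γₙ ≥ a > 0` forces `‖xₙ - p‖ - ‖yₙ - p‖ → 0`. As `yₙ` is a convex
combination of `xₙ` and `T xₙ`, two points at distance at most `‖xₙ - p‖` from `p`, whose weights
stay away from `0` and `1`, uniform convexity yields `xₙ - T xₙ → 0`. By Opial's condition `I - T`
is demiclosed at `0`, so every weak cluster point of `(xₙ)` is a fixed point, and two different
fixed points cannot both be weak cluster points because their distances to `xₙ` converge. Weak
sequential compactness of bounded closed convex sets then gives weak convergence.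
-/

section WeakTopology

variable {𝕜 E ι : Type*} [RCLike 𝕜] [NormedAddCommGroup E] [NormedSpace 𝕜 E]

theorem tendsto_toWeakSpace_iff {l : Filter ι} {x : ι → E} {u : E} :
    Tendsto (fun i => toWeakSpace 𝕜 E (x i)) l (𝓝 (toWeakSpace 𝕜 E u)) ↔
      ∀ f : E →L[𝕜] 𝕜, Tendsto (fun i => f (x i)) l (𝓝 (f u)) :=
  WeakBilin.tendsto_iff_forall_eval_tendsto _ fun _ _ h =>
    SeparatingDual.eq_iff_forall_dual_eq.2 fun f => LinearMap.congr_fun h f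

theorem isBounded_range_of_tendsto_toWeakSpace {x : ℕ → E} {u : E}
    (hx : Tendsto (fun n => toWeakSpace 𝕜 E (x n)) atTop (𝓝 (toWeakSpace 𝕜 E u))) :
    Bornology.IsBounded (Set.range x) := by
  obtain ⟨R, hR⟩ := banach_steinhaus (g := fun n => NormedSpace.inclusionInDoubleDual 𝕜 E (x n))
    fun f => by
      obtain ⟨M, hM⟩ :=
        (Metric.isBounded_range_of_tendsto _ (tendsto_toWeakSpace_iff.1 hx f)).exists_norm_le
      exact ⟨M, fun n => hM _ ⟨n, rfl⟩⟩
  refine isBounded_iff_forall_norm_le.2 ⟨R, ?_⟩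
  rintro _ ⟨n, rfl⟩
  exact ((NormedSpace.inclusionInDoubleDualLi 𝕜).norm_map (x n)).symm.trans_le (hR n)

theorem exists_seq_dual_separating {s : Set E} (hs : TopologicalSpace.IsSeparable s) :
    ∃ g : ℕ → E →L[𝕜] 𝕜, ∀ v ∈ s, (∀ k, g k v = 0) → v = 0 := by
  rcases s.eq_empty_or_nonempty with rfl | hne
  · exact ⟨0, by simp⟩
  obtain ⟨c, hc, hsc⟩ := hs
  obtain ⟨d, rfl⟩ := hc.exists_eq_range (closure_nonempty_iff.1 (hne.mono hsc))
  choose g hg hgd using fun k => exists_dual_vector'' 𝕜 (d k)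
  refine ⟨g, fun v hv hgv => norm_le_zero_iff.1 (le_of_forall_pos_le_add fun ε hε => ?_)⟩
  obtain ⟨_, ⟨k, rfl⟩, hk⟩ := Metric.mem_closure_iff.1 (hsc hv) (ε / 2) (half_pos hε)
  have hdk : ‖d k‖ ≤ ‖d k - v‖ := calc
    ‖d k‖ = ‖g k (d k - v)‖ := by rw [map_sub, hgv, sub_zero, hgd, RCLike.norm_coe_norm]
    _ ≤ ‖d k - v‖ := (g k).le_of_opNorm_le_of_le (hg k) le_rfl |>.trans_eq (one_mul _)
  rw [dist_comm, dist_eq_norm] at hk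
  linarith [norm_le_norm_add_norm_sub (d k) v]

theorem metrizableSpace_of_isCompact_weakSpace {K : Set (WeakSpace 𝕜 E)} (hK : IsCompact K)
    (hsep : TopologicalSpace.IsSeparable ((toWeakSpace 𝕜 E).symm '' K)) :
    TopologicalSpace.MetrizableSpace K := by
  have : CompactSpace K := isCompact_iff_compactSpace.1 hK
  obtain ⟨g, hg⟩ := exists_seq_dual_separating (𝕜 := 𝕜) (hsep.span (R := 𝕜))
  have hcont (f : E →L[𝕜] 𝕜) : Continuous fun v : WeakSpace 𝕜 E => f ((toWeakSpace 𝕜 E).symm v) :=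
    WeakBilin.eval_continuous _ f
  refine Metric.PiNatEmbed.TopologicalSpace.MetrizableSpace.of_countable_separating
    (fun k (v : K) => g k ((toWeakSpace 𝕜 E).symm v))
    (fun k => (hcont (g k)).comp continuous_subtype_val) fun v w hne => ?_
  contrapose! hne
  have hmem (v : K) : (toWeakSpace 𝕜 E).symm v ∈ Submodule.span 𝕜 ((toWeakSpace 𝕜 E).symm '' K) :=
    Submodule.subset_span ⟨v, v.2, rfl⟩
  have hvw := hg _ (Submodule.sub_mem _ (hmem v) (hmem w)) fun k => by
    rw [map_sub, hne k, sub_self]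
  exact Subtype.ext ((toWeakSpace 𝕜 E).symm.injective (sub_eq_zero.1 hvw))

/-- The easy half of the Eberlein–Šmulian theorem: a weakly compact set in a norm-separable subspace
is metrizable, and the closed span of a sequence is weakly closed. -/
theorem isSeqCompact_of_isCompact_weakSpace {K : Set (WeakSpace 𝕜 E)} (hK : IsCompact K) :
    IsSeqCompact K := by
  intro x hxK
  let _ : NormedSpace ℝ E := NormedSpace.restrictScalars ℝ 𝕜 E
  set M : Submodule 𝕜 E :=
    (Submodule.span 𝕜 (Set.range fun n => (toWeakSpace 𝕜 E).symm (x n))).topologicalClosure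
  have hMsep : TopologicalSpace.IsSeparable (M : Set E) := by
    rw [Submodule.topologicalClosure_coe]
    exact ((Set.countable_range _).isSeparable.span (R := 𝕜)).closure
  have hMclosed : IsClosed (toWeakSpace 𝕜 E '' M) := by
    have hMconv : Convex ℝ (M : Set E) := (M.restrictScalars ℝ).convex
    rw [← (Submodule.isClosed_topologicalClosure _ : IsClosed (M : Set E)).closure_eq,
      hMconv.toWeakSpace_closure 𝕜]
    exact isClosed_closure
  set L : Set (WeakSpace 𝕜 E) := K ∩ toWeakSpace 𝕜 E '' M
  have hxL (n : ℕ) : x n ∈ L :=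
    ⟨hxK n, _, subset_closure (Submodule.subset_span ⟨n, rfl⟩), LinearEquiv.apply_symm_apply _ _⟩
  have hL : IsCompact L := hK.inter_right hMclosed
  have : CompactSpace L := isCompact_iff_compactSpace.1 hL
  have : TopologicalSpace.MetrizableSpace L :=
    metrizableSpace_of_isCompact_weakSpace hL <| hMsep.mono <| by
      rintro _ ⟨_, ⟨-, v, hv, rfl⟩, rfl⟩
      simpa using hv
  obtain ⟨u, φ, hφ, hu⟩ := CompactSpace.tendsto_subseq fun n => (⟨x n, hxL n⟩ : L)
  exact ⟨u, u.2.1, φ, hφ, (continuous_subtype_val.tendsto u).comp hu⟩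

end WeakTopology

section UniformConvexity

variable {E : Type*} [NormedAddCommGroup E] [NormedSpace ℝ E] [UniformConvexSpace E]

variable (E) in
theorem exists_forall_le_norm_add_le_two_mul_sub {ε : ℝ} (hε : 0 < ε) (R : ℝ) :
    ∃ δ, 0 < δ ∧ ∀ r ≤ R, ∀ x y : E, ‖x‖ ≤ r → ‖y‖ ≤ r → ε ≤ ‖x - y‖ →
      ‖x + y‖ ≤ 2 * r - δ := by
  obtain hR | hR := le_or_gt R 0
  · refine ⟨1, one_pos, fun r hr x y hx hy hxy => ?_⟩
    linarith [norm_sub_le x y]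
  obtain ⟨δ, hδ, H⟩ := exists_forall_closed_ball_dist_add_le_two_sub E (div_pos hε hR)
  refine ⟨δ * (ε / 2), by positivity, fun r hrR x y hx hy hxy => ?_⟩
  have hεr : ε / 2 ≤ r := by linarith [norm_sub_le x y]
  have hr : 0 < r := by linarith
  have hnorm (v : E) : ‖r⁻¹ • v‖ = ‖v‖ / r := by
    rw [norm_smul_of_nonneg (inv_nonneg.2 hr.le), inv_mul_eq_div]
  have hscaled : ‖r⁻¹ • x + r⁻¹ • y‖ ≤ 2 - δ := by
    apply H
    · rwa [hnorm, div_le_one hr]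
    · rwa [hnorm, div_le_one hr]
    · rw [← smul_sub, hnorm]
      gcongr
  rw [← smul_add, hnorm, div_le_iff₀ hr] at hscaled
  calc ‖x + y‖ ≤ (2 - δ) * r := hscaled
    _ = 2 * r - δ * r := by ring
    _ ≤ 2 * r - δ * (ε / 2) := by gcongr

variable (E) in
theorem exists_forall_le_norm_convex_combo_le {ε : ℝ} (hε : 0 < ε) (R : ℝ) :
    ∃ δ, 0 < δ ∧ ∀ r ≤ R, ∀ x y : E, ‖x‖ ≤ r → ‖y‖ ≤ r → ε ≤ ‖x - y‖ →
      ∀ t ∈ Set.Icc (0 : ℝ) 1, ‖(1 - t) • x + t • y‖ ≤ r - t * (1 - t) * δ := by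
  obtain ⟨δ, hδ, H⟩ := exists_forall_le_norm_add_le_two_mul_sub E hε R
  refine ⟨δ, hδ, fun r hr x y hx hy hxy t ht => ?_⟩
  wlog hthalf : t ≤ 1 / 2 generalizing x y t
  · have := this y x hy hx (by rwa [norm_sub_rev]) (1 - t) ⟨by linarith [ht.2], by linarith [ht.1]⟩
      (by linarith)
    rwa [sub_sub_cancel, add_comm, mul_comm (1 - t)] at this
  have ht0 : 0 ≤ t := ht.1
  calc ‖(1 - t) • x + t • y‖ = ‖(1 - 2 * t) • x + t • (x + y)‖ := by congr 1; module
    _ ≤ (1 - 2 * t) * ‖x‖ + t * ‖x + y‖ := by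
      refine (norm_add_le _ _).trans_eq ?_
      rw [norm_smul_of_nonneg (by linarith), norm_smul_of_nonneg ht0]
    _ ≤ (1 - 2 * t) * r + t * (2 * r - δ) := by
      gcongr
      · linarith
      · exact H r hr x y hx hy hxy
    _ ≤ r - t * (1 - t) * δ := by linarith [mul_nonneg (mul_nonneg ht0 ht0) hδ.le]

theorem tendsto_sub_zero_of_tendsto_norm_convex_combo {ι : Type*} {l : Filter ι} {u v : ι → E}
    {r t : ι → ℝ} {R : ℝ} (hr : ∀ i, r i ≤ R) (hu : ∀ i, ‖u i‖ ≤ r i) (hv : ∀ i, ‖v i‖ ≤ r i)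
    (ht : ∀ i, t i ∈ Set.Icc (0 : ℝ) 1) (hliminf : 0 < liminf (fun i => t i * (1 - t i)) l)
    (hgap : Tendsto (fun i => r i - ‖(1 - t i) • u i + t i • v i‖) l (𝓝 0)) :
    Tendsto (fun i => u i - v i) l (𝓝 0) := by
  obtain ⟨c, hc0, hc⟩ := exists_between hliminf
  have hct : ∀ᶠ i in l, c < t i * (1 - t i) :=
    eventually_lt_of_lt_liminf hc <| isBoundedUnder_of
      ⟨0, fun i => mul_nonneg (ht i).1 (sub_nonneg.2 (ht i).2)⟩
  refine Metric.tendsto_nhds.2 fun ε hε => ?_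
  obtain ⟨δ, hδ, H⟩ := exists_forall_le_norm_convex_combo_le E hε R
  filter_upwards [hct, hgap.eventually_lt_const (mul_pos hc0 hδ)] with i hci hgapi
  rw [dist_zero_right]
  by_contra! hfar
  have hcombo := H (r i) (hr i) (u i) (v i) (hu i) (hv i) hfar (t i) (ht i)
  have : c * δ < t i * (1 - t i) * δ := by gcongr
  linarith

variable (E) in
theorem exists_forall_convex_dist_lt {ε : ℝ} (hε : 0 < ε) (r : ℝ) :
    ∃ η > 0, ∀ K : Set E, Convex ℝ K → (∀ v ∈ K, r - η < ‖v‖) →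
      ∀ v ∈ K, ∀ w ∈ K, ‖v‖ ≤ r + η → ‖w‖ ≤ r + η → dist v w < ε := by
  obtain ⟨δ, hδ, H⟩ := exists_forall_le_norm_add_le_two_mul_sub E hε (r + 1)
  refine ⟨min 1 (δ / 4), by positivity, fun K hK hlow v hv w hw hvr hwr => ?_⟩
  set η := min 1 (δ / 4)
  by_contra! hfar
  rw [dist_eq_norm] at hfar
  have hsum := H (r + η) (by gcongr; exact min_le_left _ _) v w hvr hwr hfar
  have hmid : r - η < 2⁻¹ * ‖v + w‖ := by
    rw [← norm_smul_of_nonneg (by norm_num), smul_add]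
    exact hlow _ (hK hv hw (by norm_num) (by norm_num) (by norm_num))
  linarith [min_le_right 1 (δ / 4)]

theorem nonempty_iInter_of_directed_convex_isClosed [CompleteSpace E] {ι : Type*} [Nonempty ι]
    {K : ι → Set E} {R : ℝ} (hdir : Directed (· ⊇ ·) K) (hconv : ∀ i, Convex ℝ (K i))
    (hclosed : ∀ i, IsClosed (K i)) (hne : ∀ i, (K i ∩ Metric.closedBall 0 R).Nonempty) :
    (⋂ i, K i).Nonempty := by
  have hbdd : BddAbove (Set.range fun i => Metric.infDist 0 (K i)) := by
    refine ⟨R, ?_⟩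
    rintro _ ⟨i, rfl⟩
    obtain ⟨v, hv, hvR⟩ := hne i
    exact (Metric.infDist_le_dist_of_mem hv).trans (Metric.mem_closedBall'.1 hvR)
  -- By uniform convexity, the nearly norm-minimal points of the sets `K i` form a Cauchy filter.
  set r := ⨆ i, Metric.infDist 0 (K i)
  let G : Filter E := ⨅ p : ι × Set.Ioi r, 𝓟 (K p.1 ∩ Metric.closedBall 0 p.2)
  have hG : G.HasBasis (fun _ => True) fun p : ι × Set.Ioi r =>
      K p.1 ∩ Metric.closedBall 0 p.2 := by
    refine hasBasis_iInf_principal fun ⟨i, ρ⟩ ⟨j, σ⟩ => ?_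
    obtain ⟨k, hki, hkj⟩ := hdir i j
    exact ⟨(k, min ρ σ), Set.inter_subset_inter hki (Metric.closedBall_subset_closedBall
      (min_le_left ρ σ)), Set.inter_subset_inter hkj (Metric.closedBall_subset_closedBall
      (min_le_right ρ σ))⟩
  have hneBot : G.NeBot := hG.neBot_iff.2 fun {p} _ => by
    obtain ⟨v, hv, hvr⟩ := (Metric.infDist_lt_iff ((hne p.1).mono Set.inter_subset_left)).1
      ((le_ciSup hbdd p.1).trans_lt p.2.2)
    exact ⟨v, hv, Metric.mem_closedBall'.2 hvr.le⟩
  have hcauchy : Cauchy G := by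
    refine Metric.cauchy_iff.2 ⟨hneBot, fun ε hε => ?_⟩
    obtain ⟨η, hη, H⟩ := exists_forall_convex_dist_lt E hε r
    obtain ⟨i, hi⟩ := exists_lt_of_lt_ciSup (sub_lt_self r hη)
    refine ⟨_, hG.mem_of_mem (i := (i, ⟨r + η, lt_add_of_pos_right r hη⟩)) trivial, ?_⟩
    rintro v ⟨hv, hvr⟩ w ⟨hw, hwr⟩
    refine H (K i) (hconv i) (fun z hz => ?_) v hv w hw (mem_closedBall_zero_iff.1 hvr)
      (mem_closedBall_zero_iff.1 hwr)
    exact hi.trans_le ((Metric.infDist_le_dist_of_mem hz).trans_eq (dist_zero_left z))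
  obtain ⟨u, hu⟩ := CompleteSpace.complete hcauchy
  refine ⟨u, Set.mem_iInter.2 fun i => (hclosed i).mem_of_tendsto (tendsto_id'.2 hu) ?_⟩
  exact mem_of_superset (hG.mem_of_mem (i := (i, ⟨r + 1, lt_add_one r⟩)) trivial)
    Set.inter_subset_left

theorem isCompact_toWeakSpace_image [CompleteSpace E] {K : Set E} (hconv : Convex ℝ K)
    (hclosed : IsClosed K) (hbdd : Bornology.IsBounded K) : IsCompact (toWeakSpace ℝ E '' K) := by
  obtain ⟨R, hR⟩ := hbdd.subset_closedBall 0
  refine isCompact_iff_ultrafilter_le_nhds'.2 fun U hU => ?_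
  let V : Ultrafilter E := U.map (toWeakSpace ℝ E).symm
  have hVK : K ∈ V := by
    rwa [LinearEquiv.image_eq_preimage_symm] at hU
  -- The weak limit of `V` is a common point of the closed convex sets in `V`: it violates no
  -- half-space condition that holds `V`-eventually.
  let ι := {S : Set E // S ∈ V ∧ Convex ℝ S ∧ IsClosed S}
  have : Nonempty ι := ⟨K, hVK, hconv, hclosed⟩
  obtain ⟨u, hu⟩ := nonempty_iInter_of_directed_convex_isClosed (K := fun S : ι => S.1) (R := R)
    (fun S S' => ⟨⟨S.1 ∩ S'.1, inter_mem S.2.1 S'.2.1, S.2.2.1.inter S'.2.2.1,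
      S.2.2.2.inter S'.2.2.2⟩, Set.inter_subset_left, Set.inter_subset_right⟩)
    (fun S => S.2.2.1) (fun S => S.2.2.2)
    fun S => (V.nonempty_of_mem (inter_mem S.2.1 hVK)).mono (Set.inter_subset_inter_right _ hR)
  have hmem {S : Set E} (hS : S ∈ V) (hSconv : Convex ℝ S) (hSclosed : IsClosed S) : u ∈ S :=
    Set.mem_iInter.1 hu ⟨S, hS, hSconv, hSclosed⟩
  have hlt (f : E →L[ℝ] ℝ) {c : ℝ} (hc : f u < c) : ∀ᶠ v in (V : Filter E), f v < c := by
    by_contra hnot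
    have hge : {v | c ≤ f v} ∈ V := by
      simpa [Set.compl_ofPred] using Ultrafilter.compl_mem_iff_notMem.2 hnot
    exact hc.not_ge (hmem hge (convex_halfSpace_ge f.isLinear c)
      (isClosed_le continuous_const f.continuous))
  have hVu : Tendsto (fun v => toWeakSpace ℝ E v) V (𝓝 (toWeakSpace ℝ E u)) :=
    tendsto_toWeakSpace_iff.2 fun f => tendsto_order.2
      ⟨fun c hc => by simpa using hlt (-f) (c := -c) (by simpa using hc), fun c hc => hlt f hc⟩
  refine ⟨toWeakSpace ℝ E u, ⟨u, hmem hVK hconv hclosed, rfl⟩, ?_⟩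
  simpa [V, Tendsto, Filter.map_map, Function.comp_def] using hVu

end UniformConvexity

section Opial

variable {E : Type*} [NormedAddCommGroup E] [NormedSpace ℝ E]

variable (E) in
/-- **Opial's condition**: the weak limit of a sequence is its strict asymptotic nearest point.
Weakly convergent sequences are bounded, so the real-valued `liminf`s are genuine. -/
def OpialCondition : Prop :=
  ∀ (z : ℕ → E) (u : E),
    Tendsto (fun n => toWeakSpace ℝ E (z n)) atTop (𝓝 (toWeakSpace ℝ E u)) →
    ∀ v : E, v ≠ u → liminf (fun n => ‖z n - u‖) atTop < liminf (fun n => ‖z n - v‖) atTop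

namespace OpialCondition

theorem lt_of_tendsto (hE : OpialCondition E) {z : ℕ → E} {u v : E}
    (hz : Tendsto (fun n => toWeakSpace ℝ E (z n)) atTop (𝓝 (toWeakSpace ℝ E u))) (hvu : v ≠ u)
    {A B : ℝ} (hA : Tendsto (fun n => ‖z n - u‖) atTop (𝓝 A))
    (hB : Tendsto (fun n => ‖z n - v‖) atTop (𝓝 B)) : A < B := by
  simpa only [hA.liminf_eq, hB.liminf_eq] using hE z u hz v hvu

theorem exists_mem_tendsto_toWeakSpace (hE : OpialCondition E) {K F : Set E}
    (hK : IsCompact (toWeakSpace ℝ E '' K)) {x : ℕ → E} (hxK : ∀ n, x n ∈ K)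
    (hdist : ∀ p ∈ F, ∃ d, Tendsto (fun n => ‖x n - p‖) atTop (𝓝 d))
    (hcluster : ∀ p ∈ K, ∀ φ : ℕ → ℕ, Tendsto φ atTop atTop →
      Tendsto (fun n => toWeakSpace ℝ E (x (φ n))) atTop (𝓝 (toWeakSpace ℝ E p)) → p ∈ F) :
    ∃ p ∈ F, Tendsto (fun n => toWeakSpace ℝ E (x n)) atTop (𝓝 (toWeakSpace ℝ E p)) := by
  have hsubseq (φ : ℕ → ℕ) (hφ : Tendsto φ atTop atTop) : ∃ p ∈ F, ∃ ψ : ℕ → ℕ, StrictMono ψ ∧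
      Tendsto (fun n => toWeakSpace ℝ E (x (φ (ψ n)))) atTop (𝓝 (toWeakSpace ℝ E p)) := by
    obtain ⟨_, ⟨p, hp, rfl⟩, ψ, hψ, hlim⟩ := isSeqCompact_of_isCompact_weakSpace hK
      fun n => Set.mem_image_of_mem (toWeakSpace ℝ E) (hxK (φ n))
    exact ⟨p, hcluster p hp (φ ∘ ψ) (hφ.comp hψ.tendsto_atTop) hlim, ψ, hψ, hlim⟩
  obtain ⟨p, hp, φ, hφ, hφlim⟩ := hsubseq id tendsto_id
  obtain ⟨d, hd⟩ := hdist p hp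
  refine ⟨p, hp, tendsto_of_subseq_tendsto fun ns hns => ?_⟩
  obtain ⟨q, hq, ψ, hψ, hψlim⟩ := hsubseq ns hns
  obtain ⟨e, he⟩ := hdist q hq
  have hnsψ : Tendsto (fun n => ns (ψ n)) atTop atTop := hns.comp hψ.tendsto_atTop
  obtain rfl : q = p := by
    by_contra hne
    have hde : d < e := hE.lt_of_tendsto hφlim hne (hd.comp hφ.tendsto_atTop)
      (he.comp hφ.tendsto_atTop)
    have hed : e < d := hE.lt_of_tendsto hψlim (Ne.symm hne) (he.comp hnsψ) (hd.comp hnsψ)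
    exact lt_asymm hde hed
  exact ⟨ψ, hψlim⟩

end OpialCondition

end Opial

section NonlinearMaps

variable {E : Type*} [NormedAddCommGroup E] {C : Set E} {T : E → E}

/-- A map is quasi-nonexpansive on `C` if it does not increase the distance from points of `C` to
its fixed points in `C`. -/
def QuasiNonexpansiveOn (T : E → E) (C : Set E) : Prop :=
  ∀ p ∈ C, Function.IsFixedPt T p → ∀ x ∈ C, ‖T x - p‖ ≤ ‖x - p‖

/-- `I - T` is demiclosed at `0` on `C`: weak limits in `C` of approximate fixed point sequences in
`C` are fixed points of `T`. -/
def SubDemiclosedAtZeroOn [NormedSpace ℝ E] (T : E → E) (C : Set E) : Prop :=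
  ∀ (z : ℕ → E) (u : E), (∀ n, z n ∈ C) → u ∈ C →
    Tendsto (fun n => toWeakSpace ℝ E (z n)) atTop (𝓝 (toWeakSpace ℝ E u)) →
    Tendsto (fun n => z n - T (z n)) atTop (𝓝 0) → Function.IsFixedPt T u

/-- `(α, β, γ, δ)`-symmetric generalized hybrid maps on `C`. -/
def SymmGenHybridOn (α β γ δ : ℝ) (T : E → E) (C : Set E) : Prop :=
  ∀ x ∈ C, ∀ y ∈ C,
    α * ‖T x - T y‖ ^ 2 + β * (‖x - T y‖ ^ 2 + ‖T x - y‖ ^ 2) + γ * ‖x - y‖ ^ 2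
      + δ * (‖x - T x‖ ^ 2 + ‖y - T y‖ ^ 2) ≤ 0

namespace SymmGenHybridOn

variable {α β γ δ : ℝ}

theorem quasiNonexpansiveOn (hT : SymmGenHybridOn α β γ δ T C) (hsum : 0 ≤ α + 2 * β + γ)
    (hαβ : 0 < α + β) (hδ : 0 ≤ δ) : QuasiNonexpansiveOn T C := by
  intro p hp hTp x hx
  have hxp := hT x hx p hp
  rw [hTp.eq, sub_self, norm_zero] at hxp
  have hδ' : 0 ≤ δ * ‖x - T x‖ ^ 2 := by positivity
  have hsq : 0 ≤ (α + 2 * β + γ) * ‖x - p‖ ^ 2 := by positivity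
  refine (sq_le_sq₀ (norm_nonneg _) (norm_nonneg _)).1 (le_of_mul_le_mul_left ?_ hαβ)
  linarith

theorem subDemiclosedAtZeroOn [NormedSpace ℝ E] (hE : OpialCondition E)
    (hT : SymmGenHybridOn α β γ δ T C) (hsum : 0 ≤ α + 2 * β + γ) (hαβ : 0 < α + β)
    (hδ : 0 ≤ δ) : SubDemiclosedAtZeroOn T C := by
  intro z u hzC hu hzu hzT
  by_contra hne
  obtain ⟨R, hR⟩ := (isBounded_range_of_tendsto_toWeakSpace hzu).exists_norm_le
  have hbound (v : E) (n : ℕ) : ‖z n - v‖ ∈ Set.Icc 0 (R + ‖v‖) :=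
    ⟨norm_nonneg _, norm_sub_le_of_le (hR _ ⟨n, rfl⟩) le_rfl⟩
  obtain ⟨⟨A, B⟩, -, φ, hφ, hAB⟩ := (isCompact_Icc.prod isCompact_Icc).tendsto_subseq
    (x := fun n => (‖z n - u‖, ‖z n - T u‖)) fun n => ⟨hbound u n, hbound (T u) n⟩
  obtain ⟨hA, hB⟩ := (Prod.tendsto_iff _ _).1 hAB
  have hlt : A < B := hE.lt_of_tendsto (hzu.comp hφ.tendsto_atTop) hne hA hB
  have hA0 : 0 ≤ A := ge_of_tendsto' hA fun n => norm_nonneg _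
  have hres : Tendsto (fun n => ‖z (φ n) - T (z (φ n))‖) atTop (𝓝 0) :=
    tendsto_zero_iff_norm_tendsto_zero.1 (hzT.comp hφ.tendsto_atTop)
  have himage {v : E} {L : ℝ} (hL : Tendsto (fun n => ‖z (φ n) - v‖) atTop (𝓝 L)) :
      Tendsto (fun n => ‖T (z (φ n)) - v‖) atTop (𝓝 L) := by
    refine tendsto_of_tendsto_of_dist hL (squeeze_zero (fun _ => dist_nonneg) (fun n => ?_) hres)
    simpa using dist_norm_norm_le (z (φ n) - v) (T (z (φ n)) - v)
  have hlim : α * B ^ 2 + β * (B ^ 2 + A ^ 2) + γ * A ^ 2 + δ * (0 ^ 2 + ‖u - T u‖ ^ 2) ≤ 0 :=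
    le_of_tendsto' ((((((himage hB).pow 2).const_mul α).add
      (((hB.pow 2).add ((himage hA).pow 2)).const_mul β)).add ((hA.pow 2).const_mul γ)).add
      (((hres.pow 2).add tendsto_const_nhds).const_mul δ)) fun n => hT (z (φ n)) (hzC _) u hu
  have hδ' : 0 ≤ δ * ‖u - T u‖ ^ 2 := by positivity
  have hsq : 0 ≤ (α + 2 * β + γ) * A ^ 2 := by positivity
  have hpos : 0 < (α + β) * (B ^ 2 - A ^ 2) :=
    mul_pos hαβ (sub_pos.2 (pow_lt_pow_left₀ hlt hA0 two_ne_zero))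
  linarith

end SymmGenHybridOn

end NonlinearMaps

section Ishikawa

variable {E : Type*} [NormedAddCommGroup E] [NormedSpace ℝ E] {C : Set E} {T : E → E}
  {lam gam : ℕ → ℝ} {x y : ℕ → E}

/-- `x` is an Ishikawa iteration of `T` with auxiliary sequence `y` and relaxation parameters `lam`
(inner step) and `gam` (outer step), both in `[0, 1]`. -/
structure IsIshikawaIteration (T : E → E) (lam gam : ℕ → ℝ) (x y : ℕ → E) : Prop where
  lam_mem : ∀ n, lam n ∈ Set.Icc (0 : ℝ) 1
  gam_mem : ∀ n, gam n ∈ Set.Icc (0 : ℝ) 1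
  eq_inner : ∀ n, y n = (1 - lam n) • x n + lam n • T (x n)
  eq_succ : ∀ n, x (n + 1) = (1 - gam n) • x n + gam n • T (y n)

theorem norm_convex_combo_sub_le {t : ℝ} (ht : t ∈ Set.Icc (0 : ℝ) 1) (v w p : E) :
    ‖(1 - t) • v + t • w - p‖ ≤ (1 - t) * ‖v - p‖ + t * ‖w - p‖ := by
  simpa only [dist_eq_norm, smul_eq_mul] using (convexOn_univ_dist p).2 (Set.mem_univ v)
    (Set.mem_univ w) (sub_nonneg.2 ht.2) ht.1 (sub_add_cancel 1 t)

namespace IsIshikawaIteration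

theorem inner_mem (h : IsIshikawaIteration T lam gam x y) (hC : Convex ℝ C)
    (hTC : Set.MapsTo T C C) {n : ℕ} (hn : x n ∈ C) : y n ∈ C := by
  rw [h.eq_inner]
  exact hC hn (hTC hn) (sub_nonneg.2 (h.lam_mem n).2) (h.lam_mem n).1 (sub_add_cancel _ _)

theorem mem (h : IsIshikawaIteration T lam gam x y) (hC : Convex ℝ C) (hTC : Set.MapsTo T C C)
    (h0 : x 0 ∈ C) (n : ℕ) : x n ∈ C := by
  induction n with
  | zero => exact h0
  | succ n ih =>
    rw [h.eq_succ]
    exact hC ih (hTC (h.inner_mem hC hTC ih)) (sub_nonneg.2 (h.gam_mem n).2) (h.gam_mem n).1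
      (sub_add_cancel _ _)

theorem norm_inner_sub_le (h : IsIshikawaIteration T lam gam x y)
    (hT : QuasiNonexpansiveOn T C) {p : E} (hp : p ∈ C) (hTp : Function.IsFixedPt T p) {n : ℕ}
    (hn : x n ∈ C) : ‖y n - p‖ ≤ ‖x n - p‖ := calc
  ‖y n - p‖ ≤ (1 - lam n) * ‖x n - p‖ + lam n * ‖T (x n) - p‖ := by
    rw [h.eq_inner]
    exact norm_convex_combo_sub_le (h.lam_mem n) _ _ _
  _ ≤ (1 - lam n) * ‖x n - p‖ + lam n * ‖x n - p‖ := by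
    gcongr
    · exact (h.lam_mem n).1
    · exact hT p hp hTp _ hn
  _ = ‖x n - p‖ := by ring

theorem norm_succ_sub_le (h : IsIshikawaIteration T lam gam x y)
    (hT : QuasiNonexpansiveOn T C) {p : E} (hp : p ∈ C) (hTp : Function.IsFixedPt T p) {n : ℕ}
    (hn : y n ∈ C) : ‖x (n + 1) - p‖ ≤ (1 - gam n) * ‖x n - p‖ + gam n * ‖y n - p‖ := calc
  ‖x (n + 1) - p‖ ≤ (1 - gam n) * ‖x n - p‖ + gam n * ‖T (y n) - p‖ := by
    rw [h.eq_succ]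
    exact norm_convex_combo_sub_le (h.gam_mem n) _ _ _
  _ ≤ (1 - gam n) * ‖x n - p‖ + gam n * ‖y n - p‖ := by
    gcongr
    · exact (h.gam_mem n).1
    · exact hT p hp hTp _ hn

theorem antitone_norm_sub (h : IsIshikawaIteration T lam gam x y) (hC : Convex ℝ C)
    (hTC : Set.MapsTo T C C) (hT : QuasiNonexpansiveOn T C) (h0 : x 0 ∈ C) {p : E} (hp : p ∈ C)
    (hTp : Function.IsFixedPt T p) : Antitone fun n => ‖x n - p‖ := by
  refine antitone_nat_of_succ_le fun n => ?_
  have hxn := h.mem hC hTC h0 n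
  calc ‖x (n + 1) - p‖ ≤ (1 - gam n) * ‖x n - p‖ + gam n * ‖y n - p‖ :=
        h.norm_succ_sub_le hT hp hTp (h.inner_mem hC hTC hxn)
    _ ≤ (1 - gam n) * ‖x n - p‖ + gam n * ‖x n - p‖ := by
      gcongr
      · exact (h.gam_mem n).1
      · exact h.norm_inner_sub_le hT hp hTp hxn
    _ = ‖x n - p‖ := by ring

theorem exists_tendsto_norm_sub (h : IsIshikawaIteration T lam gam x y) (hC : Convex ℝ C)
    (hTC : Set.MapsTo T C C) (hT : QuasiNonexpansiveOn T C) (h0 : x 0 ∈ C) {p : E} (hp : p ∈ C)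
    (hTp : Function.IsFixedPt T p) : ∃ d, Tendsto (fun n => ‖x n - p‖) atTop (𝓝 d) :=
  ⟨_, tendsto_atTop_ciInf (h.antitone_norm_sub hC hTC hT h0 hp hTp)
    ⟨0, Set.forall_mem_range.2 fun _ => norm_nonneg _⟩⟩

theorem tendsto_norm_sub_sub_norm_inner_sub (h : IsIshikawaIteration T lam gam x y)
    (hC : Convex ℝ C) (hTC : Set.MapsTo T C C) (hT : QuasiNonexpansiveOn T C) (h0 : x 0 ∈ C)
    {p : E} (hp : p ∈ C) (hTp : Function.IsFixedPt T p) {a : ℝ} (ha : 0 < a)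
    (hgam : ∀ n, a ≤ gam n) :
    Tendsto (fun n => ‖x n - p‖ - ‖y n - p‖) atTop (𝓝 0) := by
  obtain ⟨d, hd⟩ := h.exists_tendsto_norm_sub hC hTC hT h0 hp hTp
  have hdecr : Tendsto (fun n => a⁻¹ * (‖x n - p‖ - ‖x (n + 1) - p‖)) atTop (𝓝 0) := by
    simpa using (hd.sub ((tendsto_add_atTop_iff_nat 1).2 hd)).const_mul a⁻¹
  have hxC := h.mem hC hTC h0
  have hnonneg (n : ℕ) : 0 ≤ ‖x n - p‖ - ‖y n - p‖ :=
    sub_nonneg.2 (h.norm_inner_sub_le hT hp hTp (hxC n))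
  refine squeeze_zero hnonneg (fun n => ?_) hdecr
  rw [inv_mul_eq_div, le_div_iff₀' ha]
  calc a * (‖x n - p‖ - ‖y n - p‖) ≤ gam n * (‖x n - p‖ - ‖y n - p‖) :=
        mul_le_mul_of_nonneg_right (hgam n) (hnonneg n)
    _ ≤ ‖x n - p‖ - ‖x (n + 1) - p‖ := by
      linarith [h.norm_succ_sub_le hT hp hTp (h.inner_mem hC hTC (hxC n))]

variable [UniformConvexSpace E]

theorem tendsto_sub_map (h : IsIshikawaIteration T lam gam x y) (hC : Convex ℝ C)
    (hTC : Set.MapsTo T C C) (hT : QuasiNonexpansiveOn T C) (h0 : x 0 ∈ C)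
    (hF : ∃ p ∈ C, Function.IsFixedPt T p) {a : ℝ} (ha : 0 < a) (hgam : ∀ n, a ≤ gam n)
    (hlam : 0 < liminf (fun n => lam n * (1 - lam n)) atTop) :
    Tendsto (fun n => x n - T (x n)) atTop (𝓝 0) := by
  obtain ⟨p, hp, hTp⟩ := hF
  have hinner (n : ℕ) : y n - p = (1 - lam n) • (x n - p) + lam n • (T (x n) - p) := by
    rw [h.eq_inner]
    module
  have hgap := h.tendsto_norm_sub_sub_norm_inner_sub hC hTC hT h0 hp hTp ha hgam
  simp only [hinner] at hgap
  simpa only [sub_sub_sub_cancel_right] using tendsto_sub_zero_of_tendsto_norm_convex_combo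
    (fun n => h.antitone_norm_sub hC hTC hT h0 hp hTp n.zero_le) (fun _ => le_rfl)
    (fun n => hT p hp hTp _ (h.mem hC hTC h0 n)) h.lam_mem hlam hgap

theorem exists_tendsto_toWeakSpace [CompleteSpace E] (hE : OpialCondition E)
    (h : IsIshikawaIteration T lam gam x y) (hC : Convex ℝ C) (hCclosed : IsClosed C)
    (hTC : Set.MapsTo T C C) (hT : QuasiNonexpansiveOn T C) (hTdemi : SubDemiclosedAtZeroOn T C)
    (h0 : x 0 ∈ C) (hF : ∃ p ∈ C, Function.IsFixedPt T p) {a : ℝ} (ha : 0 < a)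
    (hgam : ∀ n, a ≤ gam n) (hlam : 0 < liminf (fun n => lam n * (1 - lam n)) atTop) :
    ∃ p ∈ C, Function.IsFixedPt T p ∧
      Tendsto (fun n => toWeakSpace ℝ E (x n)) atTop (𝓝 (toWeakSpace ℝ E p)) := by
  have hres := h.tendsto_sub_map hC hTC hT h0 hF ha hgam hlam
  obtain ⟨q, hq, hTq⟩ := hF
  have hK : IsCompact (toWeakSpace ℝ E '' (C ∩ Metric.closedBall q ‖x 0 - q‖)) :=
    isCompact_toWeakSpace_image (hC.inter (convex_closedBall _ _))
      (hCclosed.inter Metric.isClosed_closedBall)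
      (Metric.isBounded_closedBall.subset Set.inter_subset_right)
  have hxC := h.mem hC hTC h0
  have hxK (n : ℕ) : x n ∈ C ∩ Metric.closedBall q ‖x 0 - q‖ :=
    ⟨hxC n, mem_closedBall_iff_norm.2 (h.antitone_norm_sub hC hTC hT h0 hq hTq n.zero_le)⟩
  obtain ⟨p, ⟨hp, hTp⟩, hlim⟩ := hE.exists_mem_tendsto_toWeakSpace
    (F := {p | p ∈ C ∧ Function.IsFixedPt T p}) hK hxK
    (fun p hp => h.exists_tendsto_norm_sub hC hTC hT h0 hp.1 hp.2)
    fun p hp φ hφ hφp => ⟨hp.1, hTdemi _ p (fun n => hxC (φ n)) hp.1 hφp (hres.comp hφ)⟩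
  exact ⟨p, hp, hTp, hlim⟩

end IsIshikawaIteration

end Ishikawa

theorem ishikawa_symm_gen_hybrid_weak_convergence_general
    {E : Type*} [NormedAddCommGroup E] [NormedSpace ℝ E] [CompleteSpace E] [UniformConvexSpace E]
    (hE : OpialCondition E) {C : Set E} (hCcl : IsClosed C) (hCcv : Convex ℝ C)
    {T : E → E} (hTC : Set.MapsTo T C C) {α β γ δ : ℝ} (hT : SymmGenHybridOn α β γ δ T C)
    (hsum : 0 ≤ α + 2 * β + γ) (hαβ : 0 < α + β) (hδ : 0 ≤ δ)
    (hF : ∃ p ∈ C, Function.IsFixedPt T p) {a : ℝ} (ha : 0 < a) {lam gam : ℕ → ℝ}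
    (hgam : ∀ n, a ≤ gam n) (hlam : 0 < liminf (fun n => lam n * (1 - lam n)) atTop)
    {x y : ℕ → E} (h0 : x 0 ∈ C) (h : IsIshikawaIteration T lam gam x y) :
    ∃ p ∈ C, Function.IsFixedPt T p ∧
      Tendsto (fun n => toWeakSpace ℝ E (x n)) atTop (𝓝 (toWeakSpace ℝ E p)) :=
  h.exists_tendsto_toWeakSpace hE hCcv hCcl hTC (hT.quasiNonexpansiveOn hsum hαβ hδ)
    (hT.subDemiclosedAtZeroOn hE hsum hαβ hδ) h0 hF ha hgam hlam

/-- Let `E` be a uniformly convex real Banach space satisfying Opial's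
condition, `C` a nonempty closed convex subset of `E`, and `T` an `(α,β,γ,δ)`-symmetric
generalized hybrid self-mapping of `C` with a fixed point, satisfying `α+2β+γ ≥ 0`, `α+β > 0`,
`β ≤ 0`, `δ ≥ 0`. Then the Ishikawa iteration (with `λₙ ∈ [0,1]`, `γₙ ∈ [a,1]`, `0 < a ≤ 1`,
`liminf λₙ(1−λₙ) > 0`) converges weakly to a fixed point of `T`. -/
theorem ishikawa_symm_gen_hybrid_weak_convergence
    {E : Type*} [NormedAddCommGroup E] [NormedSpace ℝ E] [CompleteSpace E]
    [UniformConvexSpace E]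
    (hOpial : ∀ (z : ℕ → E) (u : E),
      (∀ f : E →L[ℝ] ℝ, Tendsto (fun n => f (z n)) atTop (𝓝 (f u))) →
      ∀ v : E, v ≠ u →
        Filter.liminf (fun n => ‖z n - u‖) atTop < Filter.liminf (fun n => ‖z n - v‖) atTop)
    (C : Set E) (hCne : C.Nonempty) (hCcl : IsClosed C) (hCcv : Convex ℝ C)
    (T : E → E) (hTself : Set.MapsTo T C C)
    (α β γ δ : ℝ)
    (hhyb : ∀ x ∈ C, ∀ y ∈ C,
      α * ‖T x - T y‖ ^ 2 + β * (‖x - T y‖ ^ 2 + ‖T x - y‖ ^ 2) + γ * ‖x - y‖ ^ 2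
        + δ * (‖x - T x‖ ^ 2 + ‖y - T y‖ ^ 2) ≤ 0)
    (hF : ∃ p ∈ C, T p = p)
    (h1 : α + 2 * β + γ ≥ 0) (h2 : α + β > 0) (h3 : β ≤ 0) (h4 : δ ≥ 0)
    (a : ℝ) (ha0 : 0 < a) (ha1 : a ≤ 1)
    (lam gam : ℕ → ℝ)
    (hlam : ∀ n, lam n ∈ Set.Icc (0 : ℝ) 1) (hgam : ∀ n, gam n ∈ Set.Icc a 1)
    (hliminf : 0 < Filter.liminf (fun n => lam n * (1 - lam n)) atTop)
    (x y : ℕ → E) (x₀ : E) (hx₀ : x₀ ∈ C) (hinit : x 0 = x₀)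
    (hy : ∀ n, y n = (1 - lam n) • x n + lam n • T (x n))
    (hxs : ∀ n, x (n + 1) = (1 - gam n) • x n + gam n • T (y n)) :
    ∃ p ∈ C, T p = p ∧
      ∀ f : E →L[ℝ] ℝ, Tendsto (fun n => f (x n)) atTop (𝓝 (f p)) := by
  simp only [← tendsto_toWeakSpace_iff] at hOpial ⊢
  exact ishikawa_symm_gen_hybrid_weak_convergence_general hOpial hCcl hCcv hTself hhyb h1 h2 h4 hF
    ha0 (fun n => (hgam n).1) hliminf (hinit ▸ hx₀)
    ⟨hlam, fun n => ⟨ha0.le.trans (hgam n).1, (hgam n).2⟩, hy, hxs⟩
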